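/- arXiv:2104.14485 — 8 statements merged into one kernel-verified Lean document; each statement's English description precedes it below -/
import Mathlib

section
/- Let (A, ≺, ≻) be a pre-alternative algebra over a field K of characteristic ≠ 2,3. Define x∘y := x≺y + x≻y. Then (A, ∘) is an alternative algebra, i.e. its associator (x,y,z) = (x∘y)∘z − x∘(y∘z) satisfies (x,y,z) = −(y,x,z) and (x,y,z) = −(x,z,y) for all x,y,z ∈ A. -/
namespace AltExtend

variable {K : Type*} [Field K]
variable {A : Type*} [AddCommGroup A] [Module K A]

/-- The associator of a bilinear multiplication. -/
def assoc (m : A →ₗ[K] A →ₗ[K] A) (x y z : A) : A :=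
  m (m x y) z - m x (m y z)

/-- `m` is an alternative algebra multiplication: the associator is alternating in the
first two and in the last two arguments. -/
def IsAltMul (m : A →ₗ[K] A →ₗ[K] A) : Prop :=
  (∀ x y z : A, assoc m x y z = - assoc m y x z) ∧
  (∀ x y z : A, assoc m x y z = - assoc m x z y)

/-- `(A, pc, sc)` is a pre-alternative algebra, where `pc x y = x ≺ y`, `sc x y = x ≻ y`
and `x ∘ y = x ≻ y + x ≺ y`. -/
def IsPreAltMul (pc sc : A →ₗ[K] A →ₗ[K] A) : Prop :=
  (∀ x y z : A,
    sc (sc x y + pc x y) z - sc x (sc y z) + sc (sc y x + pc y x) z - sc y (sc x z) = 0) ∧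
  (∀ x y z : A,
    pc (pc x y) z - pc x (sc y z + pc y z) + pc (pc x z) y - pc x (sc z y + pc z y) = 0) ∧
  (∀ x y z : A,
    pc (sc x y) z - sc x (pc y z) + pc (pc y x) z - pc y (sc x z + pc x z) = 0) ∧
  (∀ x y z : A,
    pc (sc x y) z - sc x (pc y z) + sc (sc x z + pc x z) y - sc x (sc z y) = 0)

/-- Let `(A, ≺, ≻)` be a pre-alternative algebra over a field `K` of characteristic
`≠ 2, 3`.  Then `x ∘ y := x ≺ y + x ≻ y` makes `A` an alternative algebra. -/
theorem isAltMul_of_isPreAltMul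
    (h2 : ringChar K ≠ 2) (h3 : ringChar K ≠ 3)
    (pc sc : A →ₗ[K] A →ₗ[K] A) (h : IsPreAltMul pc sc) :
    IsAltMul (pc + sc) := by
  obtain ⟨a1, a2, a3, a4⟩ := h
  constructor
  · intro x y z
    have e1 := a1 x y z
    have e2 := a3 x y z
    have e3 := a3 y x z
    simp only [assoc, LinearMap.add_apply, map_add] at *
    rw [eq_neg_iff_add_eq_zero]
    have e := congrArg₂ (· + ·) (congrArg₂ (· + ·) e1 e2) e3
    simp only [add_zero] at e
    rw [← e]
    abel
  · intro x y z
    have e1 := a2 x y z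
    have e2 := a4 x y z
    have e3 := a4 x z y
    simp only [assoc, LinearMap.add_apply, map_add] at *
    rw [eq_neg_iff_add_eq_zero]
    have e := congrArg₂ (· + ·) (congrArg₂ (· + ·) e1 e2) e3
    simp only [add_zero] at e
    rw [← e]
    abel

end AltExtend
end

section
/- Let A be an alternative algebra over a field K of characteristic ≠ 2,3, V a K-vector space, and Ω(A,V) = (▷, ◁, ⊵, ⊴, *, ω) an extending datum of A by V such that the unified product A♮V is an alternative algebra. Then the maps ▷: A×V→V and ◁: V×A→V make V a bimodule over A. -/
namespace AltExtend

variable {K : Type*} [Field K]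
variable {A : Type*} [AddCommGroup A] [Module K A]
variable {V : Type*} [AddCommGroup V] [Module K V]

/-- `(V, tr, tl)` is a bimodule over the alternative algebra `(A, m)`, where
`tr x v = x ▷ v` and `tl v x = v ◁ x`. -/
def IsAltBimodule (m : A →ₗ[K] A →ₗ[K] A)
    (tr : A →ₗ[K] V →ₗ[K] V) (tl : V →ₗ[K] A →ₗ[K] V) : Prop :=
  (∀ x y : A, ∀ v : V,
    tr (m x y) v - tr x (tr y v) + tr (m y x) v - tr y (tr x v) = 0) ∧
  (∀ x y : A, ∀ v : V,
    tl (tl v x) y - tl v (m x y) + tl (tl v y) x - tl v (m y x) = 0) ∧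
  (∀ x y : A, ∀ v : V,
    tl v (m x y) - tl (tl v x) y + tr x (tl v y) - tl (tr x v) y = 0) ∧
  (∀ x y : A, ∀ v : V,
    tr (m x y) v - tr x (tr y v) + tl (tr x v) y - tr x (tl v y) = 0)

/-- The unified product multiplication on `A × V` attached to an extending datum
`Ω(A,V) = (tr, tl, pr, pl, st, om)`:
`(x,u) • (y,v) = (x∘y + u⊵y + x⊴v + ω(u,v), u*v + x▷v + u◁y)`. -/
def unifiedMul (m : A →ₗ[K] A →ₗ[K] A)
    (tr : A →ₗ[K] V →ₗ[K] V) (tl : V →ₗ[K] A →ₗ[K] V)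
    (pr : V →ₗ[K] A →ₗ[K] A) (pl : A →ₗ[K] V →ₗ[K] A)
    (st : V →ₗ[K] V →ₗ[K] V) (om : V →ₗ[K] V →ₗ[K] A) :
    (A × V) →ₗ[K] (A × V) →ₗ[K] (A × V) :=
  LinearMap.mk₂ K
    (fun p q => (m p.1 q.1 + pr p.2 q.1 + pl p.1 q.2 + om p.2 q.2,
                 st p.2 q.2 + tr p.1 q.2 + tl p.2 q.1))
    (fun p p' q => by simp [Prod.ext_iff]; constructor <;> abel)
    (fun c p q => by simp [Prod.ext_iff, smul_add])
    (fun p q q' => by simp [Prod.ext_iff]; constructor <;> abel)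
    (fun c p q => by simp [Prod.ext_iff, smul_add])

/-- If the unified product `A ♮ V` attached to an extending datum of the alternative
algebra `A` by the vector space `V` is an alternative algebra, then `(V, tr, tl)` is a
bimodule over `A`. -/
theorem isAltBimodule_of_unifiedMul_isAltMul
    (h2 : ringChar K ≠ 2) (h3 : ringChar K ≠ 3)
    (m : A →ₗ[K] A →ₗ[K] A) (hm : IsAltMul m)
    (tr : A →ₗ[K] V →ₗ[K] V) (tl : V →ₗ[K] A →ₗ[K] V)
    (pr : V →ₗ[K] A →ₗ[K] A) (pl : A →ₗ[K] V →ₗ[K] A)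
    (st : V →ₗ[K] V →ₗ[K] V) (om : V →ₗ[K] V →ₗ[K] A)
    (h : IsAltMul (unifiedMul m tr tl pr pl st om)) :
    IsAltBimodule m tr tl := by
  have s1 := fun a b c => congrArg Prod.snd (h.1 a b c)
  have s2 := fun a b c => congrArg Prod.snd (h.2 a b c)
  refine ⟨fun x y v => ?_, fun x y v => ?_, fun x y v => ?_, fun x y v => ?_⟩
  · have e := s1 (x, 0) (y, 0) (0, v)
    simp [assoc, unifiedMul] at e
    rw [sub_eq_iff_eq_add] at e
    rw [e]; abel
  · have e := s2 (0, v) (x, 0) (y, 0)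
    simp [assoc, unifiedMul] at e
    rw [sub_eq_iff_eq_add] at e
    rw [e]; abel
  · have e := s1 (0, v) (x, 0) (y, 0)
    simp [assoc, unifiedMul] at e
    rw [sub_eq_iff_eq_add] at e
    rw [e]; abel
  · have e := s2 (x, 0) (y, 0) (0, v)
    simp [assoc, unifiedMul] at e
    rw [sub_eq_iff_eq_add] at e
    rw [e]; abel

end AltExtend
end

section
/- Let (E, ∘) be an alternative algebra over a field K of characteristic ≠ 2,3 and A ⊆ E a subalgebra. Let p: E → A be a K-linear map with p(x) = x for all x ∈ A, and set V := ker(p). Define bilinear maps by u⊵x := p(u∘x), u◁x := u∘x − p(u∘x), x⊴u := p(x∘u), x▷u := x∘u − p(x∘u), ω(u,v) := p(u∘v), u*v := u∘v − p(u∘v) for x ∈ A, u,v ∈ V. Then Ω(A,V) = (▷, ◁, ⊵, ⊴, *, ω) is an extending datum whose unified product A♮V is an alternative algebra, and the map φ: A♮V → E defined by φ(x,u) := x + u is an isomorphism of alternative algebras satisfying φ(x,0) = x for all x ∈ A (it stabilizes A) and (φ(x,u) − p(φ(x,u))) = u for all (x,u) (it co-stabilizes V). -/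
namespace AltExtend

variable {K : Type*} [Field K]
variable {A : Type*} [AddCommGroup A] [Module K A]
variable {V : Type*} [AddCommGroup V] [Module K V]

/-- Let `(E, ∘)` be an alternative algebra, `A ⊆ E` a subalgebra, `p : E → A ⊆ E` a linear
retraction onto `A` and `V := ker p`.  Then the canonical extending datum
`u⊵x := p(u∘x)`, `u◁x := u∘x − p(u∘x)`, `x⊴u := p(x∘u)`, `x▷u := x∘u − p(x∘u)`,
`ω(u,v) := p(u∘v)`, `u*v := u∘v − p(u∘v)` makes the unified product `A ♮ V` an
alternative algebra, and `φ(x,u) := x + u` is an isomorphism of alternative algebras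
`A ♮ V ≅ E` which stabilizes `A` and co-stabilizes `V`. -/
theorem subalgebra_isomorphic_to_unifiedProduct
    {E : Type*} [AddCommGroup E] [Module K E]
    (h2 : ringChar K ≠ 2) (h3 : ringChar K ≠ 3)
    (mE : E →ₗ[K] E →ₗ[K] E) (hE : IsAltMul mE)
    (A : Submodule K E) (hA : ∀ x ∈ A, ∀ y ∈ A, mE x y ∈ A)
    (p : E →ₗ[K] E) (hpmem : ∀ e : E, p e ∈ A) (hpid : ∀ x ∈ A, p x = x)
    (mA : A →ₗ[K] A →ₗ[K] A)
    (hmA : ∀ x y : A, (mA x y : E) = mE x y)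
    (tr : A →ₗ[K] (LinearMap.ker p) →ₗ[K] (LinearMap.ker p))
    (tl : (LinearMap.ker p) →ₗ[K] A →ₗ[K] (LinearMap.ker p))
    (pr : (LinearMap.ker p) →ₗ[K] A →ₗ[K] A)
    (pl : A →ₗ[K] (LinearMap.ker p) →ₗ[K] A)
    (st : (LinearMap.ker p) →ₗ[K] (LinearMap.ker p) →ₗ[K] (LinearMap.ker p))
    (om : (LinearMap.ker p) →ₗ[K] (LinearMap.ker p) →ₗ[K] A)
    (hpr : ∀ (u : LinearMap.ker p) (x : A), (pr u x : E) = p (mE u x))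
    (htl : ∀ (u : LinearMap.ker p) (x : A), ((tl u x : LinearMap.ker p) : E) = mE u x - p (mE u x))
    (hpl : ∀ (x : A) (u : LinearMap.ker p), (pl x u : E) = p (mE x u))
    (htr : ∀ (x : A) (u : LinearMap.ker p), ((tr x u : LinearMap.ker p) : E) = mE x u - p (mE x u))
    (hom : ∀ u v : LinearMap.ker p, (om u v : E) = p (mE u v))
    (hst : ∀ u v : LinearMap.ker p, ((st u v : LinearMap.ker p) : E) = mE u v - p (mE u v)) :
    IsAltMul (unifiedMul mA tr tl pr pl st om) ∧
    (∀ q : A × LinearMap.ker p,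
      (A.subtype.coprod (LinearMap.ker p).subtype) q = (q.1 : E) + (q.2 : E)) ∧
    Function.Bijective (A.subtype.coprod (LinearMap.ker p).subtype) ∧
    (∀ q q' : A × LinearMap.ker p,
      (A.subtype.coprod (LinearMap.ker p).subtype) (unifiedMul mA tr tl pr pl st om q q')
        = mE ((A.subtype.coprod (LinearMap.ker p).subtype) q)
            ((A.subtype.coprod (LinearMap.ker p).subtype) q')) ∧
    (∀ x : A, (A.subtype.coprod (LinearMap.ker p).subtype) (x, 0) = (x : E)) ∧
    (∀ q : A × LinearMap.ker p,
      (A.subtype.coprod (LinearMap.ker p).subtype) q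
        - p ((A.subtype.coprod (LinearMap.ker p).subtype) q) = (q.2 : E)) := by
  have hker : ∀ u : LinearMap.ker p, p (u : E) = 0 := fun u => u.2
  have hval : ∀ q : A × LinearMap.ker p,
      (A.subtype.coprod (LinearMap.ker p).subtype) q = (q.1 : E) + (q.2 : E) := by
    intro q
    simp [LinearMap.coprod_apply]
  have hp : ∀ q : A × LinearMap.ker p,
      p ((A.subtype.coprod (LinearMap.ker p).subtype) q) = (q.1 : E) := by
    intro q
    rw [hval, map_add, hker, hpid _ q.1.2, add_zero]
  have hco : ∀ q : A × LinearMap.ker p,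
      (A.subtype.coprod (LinearMap.ker p).subtype) q
        - p ((A.subtype.coprod (LinearMap.ker p).subtype) q) = (q.2 : E) := by
    intro q
    rw [hp, hval, add_sub_cancel_left]
  have hinj : Function.Injective (A.subtype.coprod (LinearMap.ker p).subtype) := by
    intro q q' h
    apply Prod.ext
    · apply Subtype.ext
      rw [← hp q, ← hp q', h]
    · apply Subtype.ext
      rw [← hco q, ← hco q', h]
  have hsurj : Function.Surjective (A.subtype.coprod (LinearMap.ker p).subtype) := by
    intro e
    refine ⟨(⟨p e, hpmem e⟩, ⟨e - p e, ?_⟩), ?_⟩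
    · rw [LinearMap.mem_ker, map_sub, hpid _ (hpmem e), sub_self]
    · rw [hval]
      exact add_sub_cancel _ _
  have hmul : ∀ q q' : A × LinearMap.ker p,
      (A.subtype.coprod (LinearMap.ker p).subtype) (unifiedMul mA tr tl pr pl st om q q')
        = mE ((A.subtype.coprod (LinearMap.ker p).subtype) q)
            ((A.subtype.coprod (LinearMap.ker p).subtype) q') := by
    intro q q'
    rw [hval, hval, hval]
    simp only [unifiedMul, LinearMap.mk₂_apply, Submodule.coe_add, hmA, hpr, hpl, hom, hst, htr,
      htl, map_add, LinearMap.add_apply]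
    abel
  have hass : ∀ x y z : A × LinearMap.ker p,
      (A.subtype.coprod (LinearMap.ker p).subtype)
        (assoc (unifiedMul mA tr tl pr pl st om) x y z)
        = assoc mE ((A.subtype.coprod (LinearMap.ker p).subtype) x)
            ((A.subtype.coprod (LinearMap.ker p).subtype) y)
            ((A.subtype.coprod (LinearMap.ker p).subtype) z) := by
    intro x y z
    simp only [assoc, map_sub, hmul]
  refine ⟨⟨fun x y z => hinj ?_, fun x y z => hinj ?_⟩, hval, ⟨hinj, hsurj⟩, hmul, ?_, hco⟩
  · rw [map_neg, hass, hass]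
    exact hE.1 _ _ _
  · rw [map_neg, hass, hass]
    exact hE.2 _ _ _
  · intro x
    rw [hval]
    simp

end AltExtend
end

section
/- Let A be an alternative algebra over a field K of characteristic ≠ 2,3, V a K-vector space, and let Ω(A,V) = (▷, ◁, ⊵, ⊴, *, ω) and Ω'(A,V) = (▷', ◁', ⊵', ⊴', *', ω') be two extending structures of A by V (i.e. their unified products A♮V and A♮'V are alternative algebras). For linear maps r: V→A and s: V→V, define φ: A♮V → A♮'V by φ(x,u) := (x + r(u), s(u)). Then: (1) φ is a homomorphism of alternative algebras if and only if for all x ∈ A, u,v ∈ V: s(u◁x) = s(u)◁'x; s(x▷u) = x▷'s(u); s(u*v) = r(u)▷'s(v) + s(u)◁'r(v) + s(u)*'s(v); r(u◁x) = r(u)∘x − u⊵x + s(u)⊵'x; r(x⊴u) = x∘r(u) − x⊴u + x⊴'s(u); r(u*v) = r(u)∘r(v) + ω'(s(u),s(v)) − ω(u,v) + r(u)⊴'s(v) + s(u)⊵'r(v). (2) Every algebra homomorphism ψ: A♮V → A♮'V with ψ(x,0) = (x,0) for all x ∈ A is of this form for a unique pair (r,s). (3) φ is an isomorphism if and only if s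 is bijective, and φ co-stabilizes V (i.e. the V-component of φ(x,u) is u) if and only if s = id_V. -/
namespace AltExtend

variable {K : Type*} [Field K]
variable {A : Type*} [AddCommGroup A] [Module K A]
variable {V : Type*} [AddCommGroup V] [Module K V]

/-- The linear map `φ_{r,s} : A × V → A × V`, `φ(x,u) = (x + r(u), s(u))`. -/
def phiRS (r : V →ₗ[K] A) (s : V →ₗ[K] V) : (A × V) →ₗ[K] (A × V) :=
  (LinearMap.fst K A V + r ∘ₗ LinearMap.snd K A V).prod (s ∘ₗ LinearMap.snd K A V)

/-- The six compatibility conditions on the pair `(r,s)` relating the two extending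
data `Ω(A,V)` and `Ω'(A,V)`. -/
def HomPairConditions (m : A →ₗ[K] A →ₗ[K] A)
    (tr : A →ₗ[K] V →ₗ[K] V) (tl : V →ₗ[K] A →ₗ[K] V)
    (pr : V →ₗ[K] A →ₗ[K] A) (pl : A →ₗ[K] V →ₗ[K] A)
    (st : V →ₗ[K] V →ₗ[K] V) (om : V →ₗ[K] V →ₗ[K] A)
    (tr' : A →ₗ[K] V →ₗ[K] V) (tl' : V →ₗ[K] A →ₗ[K] V)
    (pr' : V →ₗ[K] A →ₗ[K] A) (pl' : A →ₗ[K] V →ₗ[K] A)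
    (st' : V →ₗ[K] V →ₗ[K] V) (om' : V →ₗ[K] V →ₗ[K] A)
    (r : V →ₗ[K] A) (s : V →ₗ[K] V) : Prop :=
  (∀ (u : V) (x : A), s (tl u x) = tl' (s u) x) ∧
  (∀ (x : A) (u : V), s (tr x u) = tr' x (s u)) ∧
  (∀ u v : V, s (st u v) = tr' (r u) (s v) + tl' (s u) (r v) + st' (s u) (s v)) ∧
  (∀ (u : V) (x : A), r (tl u x) = m (r u) x - pr u x + pr' (s u) x) ∧
  (∀ (x : A) (u : V), r (tr x u) = m x (r u) - pl x u + pl' x (s u)) ∧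
  (∀ u v : V, r (st u v)
    = m (r u) (r v) + om' (s u) (s v) - om u v + pl' (r u) (s v) + pr' (s u) (r v))

/-- Characterization of the alternative algebra morphisms `A ♮ V → A ♮' V` which
stabilize `A`: (1) `φ_{r,s}` is multiplicative iff the six conditions hold;
(2) every multiplicative linear map stabilizing `A` is of the form `φ_{r,s}` for a
unique pair `(r,s)`; (3) a multiplicative `φ_{r,s}` is bijective iff `s` is bijective,
and co-stabilizes `V` iff `s = id`. -/
theorem morphisms_of_unified_products
    (h2 : ringChar K ≠ 2) (h3 : ringChar K ≠ 3)
    (m : A →ₗ[K] A →ₗ[K] A) (hm : IsAltMul m)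
    (tr : A →ₗ[K] V →ₗ[K] V) (tl : V →ₗ[K] A →ₗ[K] V)
    (pr : V →ₗ[K] A →ₗ[K] A) (pl : A →ₗ[K] V →ₗ[K] A)
    (st : V →ₗ[K] V →ₗ[K] V) (om : V →ₗ[K] V →ₗ[K] A)
    (tr' : A →ₗ[K] V →ₗ[K] V) (tl' : V →ₗ[K] A →ₗ[K] V)
    (pr' : V →ₗ[K] A →ₗ[K] A) (pl' : A →ₗ[K] V →ₗ[K] A)
    (st' : V →ₗ[K] V →ₗ[K] V) (om' : V →ₗ[K] V →ₗ[K] A)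
    (hΩ : IsAltMul (unifiedMul m tr tl pr pl st om))
    (hΩ' : IsAltMul (unifiedMul m tr' tl' pr' pl' st' om')) :
    (∀ (r : V →ₗ[K] A) (s : V →ₗ[K] V),
      (∀ q q' : A × V,
        phiRS r s (unifiedMul m tr tl pr pl st om q q')
          = unifiedMul m tr' tl' pr' pl' st' om' (phiRS r s q) (phiRS r s q')) ↔
      HomPairConditions m tr tl pr pl st om tr' tl' pr' pl' st' om' r s) ∧
    (∀ ψ : (A × V) →ₗ[K] (A × V),
      (∀ q q' : A × V,
        ψ (unifiedMul m tr tl pr pl st om q q')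
          = unifiedMul m tr' tl' pr' pl' st' om' (ψ q) (ψ q')) →
      (∀ x : A, ψ (x, 0) = (x, 0)) →
      ∃! rs : (V →ₗ[K] A) × (V →ₗ[K] V), ψ = phiRS rs.1 rs.2) ∧
    (∀ (r : V →ₗ[K] A) (s : V →ₗ[K] V),
      (∀ q q' : A × V,
        phiRS r s (unifiedMul m tr tl pr pl st om q q')
          = unifiedMul m tr' tl' pr' pl' st' om' (phiRS r s q) (phiRS r s q')) →
      (Function.Bijective (phiRS r s) ↔ Function.Bijective s) ∧
      ((∀ q : A × V, (phiRS r s q).2 = q.2) ↔ s = LinearMap.id)) := by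
  have hphi : ∀ (r : V →ₗ[K] A) (s : V →ₗ[K] V) (x : A) (u : V),
      phiRS r s (x, u) = (x + r u, s u) := fun r s x u => by simp [phiRS]
  have hmul : ∀ (tr : A →ₗ[K] V →ₗ[K] V) (tl : V →ₗ[K] A →ₗ[K] V)
      (pr : V →ₗ[K] A →ₗ[K] A) (pl : A →ₗ[K] V →ₗ[K] A)
      (st : V →ₗ[K] V →ₗ[K] V) (om : V →ₗ[K] V →ₗ[K] A) (x y : A) (u v : V),
      unifiedMul m tr tl pr pl st om (x, u) (y, v)
        = (m x y + pr u y + pl x v + om u v, st u v + tr x v + tl u y) := by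
    intros
    simp [unifiedMul]
  refine ⟨fun r s => ⟨fun h => ?_, fun h => ?_⟩, fun ψ _ hψ => ?_, fun r s _ => ⟨⟨fun h => ⟨?_, ?_⟩, fun h => ⟨?_, ?_⟩⟩, ⟨fun h => ?_, fun h => ?_⟩⟩⟩
  · have key : ∀ (x y : A) (u v : V), _ := fun x y u v => h (x, u) (y, v)
    simp only [hphi, hmul, Prod.mk.injEq] at key
    have k1 := fun u x => key 0 x u 0
    have k2 := fun x u => key x 0 0 u
    have k3 := fun u v => key 0 0 u v
    simp only [map_zero, LinearMap.zero_apply, add_zero, zero_add] at k1 k2 k3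
    refine ⟨fun u x => (k1 u x).2, fun x u => (k2 x u).2, fun u v => ?_, fun u x => ?_,
      fun x u => ?_, fun u v => ?_⟩
    · rw [(k3 u v).2]; abel
    · rw [← sub_eq_zero] ; have := sub_eq_zero.2 (k1 u x).1; rw [← this]; abel
    · rw [← sub_eq_zero] ; have := sub_eq_zero.2 (k2 x u).1; rw [← this]; abel
    · rw [← sub_eq_zero] ; have := sub_eq_zero.2 (k3 u v).1; rw [← this]; abel
  · obtain ⟨h1, h2, h3, h4, h5, h6⟩ := h
    rintro ⟨x, u⟩ ⟨y, v⟩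
    simp only [hphi, hmul, Prod.mk.injEq, map_add, LinearMap.add_apply, h1, h2, h3, h4, h5, h6]
    constructor <;> abel
  · refine ⟨(LinearMap.fst K A V ∘ₗ ψ ∘ₗ LinearMap.inr K A V,
      LinearMap.snd K A V ∘ₗ ψ ∘ₗ LinearMap.inr K A V), ?_, ?_⟩
    · refine LinearMap.ext fun ⟨x, u⟩ => ?_
      have e : ((x, u) : A × V) = (x, 0) + (0, u) := by simp
      rw [hphi, e, map_add, hψ]
      ext <;> simp
    · rintro ⟨r, s⟩ h
      subst h
      ext u <;> simp [hphi]
  · intro u v huv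
    have : phiRS r s (- r u, u) = phiRS r s (- r v, v) := by simp [hphi, huv]
    exact (Prod.ext_iff.1 (h.1 this)).2
  · intro v
    obtain ⟨⟨x, u⟩, hx⟩ := h.2 (0, v)
    rw [hphi] at hx
    exact ⟨u, (Prod.ext_iff.1 hx).2⟩
  · rintro ⟨x, u⟩ ⟨y, v⟩ e
    simp only [hphi, Prod.mk.injEq] at e
    obtain rfl := h.1 e.2
    rw [add_right_cancel e.1]
  · rintro ⟨x, u⟩
    obtain ⟨v, rfl⟩ := h.2 u
    exact ⟨(x - r v, v), by simp [hphi]⟩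
  · ext u
    simpa [hphi] using h (0, u)
  · rintro ⟨x, u⟩
    simp [hphi, h]

end AltExtend
end

section
/- Let A be an alternative algebra over a field K of characteristic ≠ 2,3, V a K-vector space, and let Ω(A,V) = (▷, ◁, ⊵, ⊴, *, ω) and Ω'(A,V) = (▷', ◁', ⊵', ⊴', *', ω') be two extending structures of A by V with unified products A♮V and A♮'V. Then: (1) there exists an isomorphism of alternative algebras φ: A♮V → A♮'V with φ(x,0) = (x,0) for all x ∈ A if and only if there exist a linear map r: V→A and a bijective linear map s: V→V satisfying, for all x ∈ A, u,v ∈ V: s(u◁x) = s(u)◁'x; s(x▷u) = x▷'s(u); s(u*v) = r(u)▷'s(v) + s(u)◁'r(v) + s(u)*'s(v); r(u◁x) = r(u)∘x − u⊵x + s(u)⊵'x; r(x⊴u) = x∘r(u) − x⊴u + x⊴'s(u); r(u*v) = r(u)∘r(v) + ω'(s(u),s(v)) − ω(u,v) + r(u)⊴'s(v) + s(u)⊵'r(v). (2) There exists such an isomorphism φ which in addition has V-component of φ(x,u) equal to u for all (x,u) if and only if such a pair (r,s) exists with s = id_V. -/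
namespace AltExtend

variable {K : Type*} [Field K]
variable {A : Type*} [AddCommGroup A] [Module K A]
variable {V : Type*} [AddCommGroup V] [Module K V]

theorem phiRS_apply (r : V →ₗ[K] A) (s : V →ₗ[K] V) (q : A × V) :
    phiRS r s q = (q.1 + r q.2, s q.2) := rfl

theorem unifiedMul_apply (m : A →ₗ[K] A →ₗ[K] A)
    (tr : A →ₗ[K] V →ₗ[K] V) (tl : V →ₗ[K] A →ₗ[K] V)
    (pr : V →ₗ[K] A →ₗ[K] A) (pl : A →ₗ[K] V →ₗ[K] A)
    (st : V →ₗ[K] V →ₗ[K] V) (om : V →ₗ[K] V →ₗ[K] A) (p q : A × V) :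
    unifiedMul m tr tl pr pl st om p q =
      (m p.1 q.1 + pr p.2 q.1 + pl p.1 q.2 + om p.2 q.2,
        st p.2 q.2 + tr p.1 q.2 + tl p.2 q.1) := rfl

theorem eq_phiRS (φ : (A × V) →ₗ[K] (A × V)) (h : ∀ x : A, φ (x, 0) = (x, 0)) :
    φ = phiRS (LinearMap.fst K A V ∘ₗ φ ∘ₗ LinearMap.inr K A V)
      (LinearMap.snd K A V ∘ₗ φ ∘ₗ LinearMap.inr K A V) := by
  refine LinearMap.ext fun q => ?_
  obtain ⟨x, u⟩ := q
  have : ((x, u) : A × V) = (x, 0) + (0, u) := by simp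
  rw [phiRS_apply]
  conv_lhs => rw [this, map_add, h]
  ext <;> simp

theorem phiRS_bij (r : V →ₗ[K] A) (s : V →ₗ[K] V) :
    Function.Bijective (phiRS r s) ↔ Function.Bijective s := by
  constructor
  · rintro ⟨hi, hs⟩
    constructor
    · intro u v huv
      have := @hi (-r u, u) (-r v, v) (by simp [phiRS_apply, huv])
      exact congrArg Prod.snd this
    · intro v
      obtain ⟨q, hq⟩ := hs (0, v)
      exact ⟨q.2, congrArg Prod.snd hq⟩
  · rintro ⟨hi, hs⟩
    constructor
    · rintro ⟨x, u⟩ ⟨y, v⟩ h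
      simp only [phiRS_apply, Prod.mk.injEq] at h
      obtain ⟨h1, h2⟩ := h
      obtain rfl := hi h2
      simpa using h1
    · rintro ⟨x, v⟩
      obtain ⟨u, rfl⟩ := hs v
      exact ⟨(x - r u, u), by simp [phiRS_apply]⟩

theorem phiRS_hom_iff (m : A →ₗ[K] A →ₗ[K] A)
    (tr : A →ₗ[K] V →ₗ[K] V) (tl : V →ₗ[K] A →ₗ[K] V)
    (pr : V →ₗ[K] A →ₗ[K] A) (pl : A →ₗ[K] V →ₗ[K] A)
    (st : V →ₗ[K] V →ₗ[K] V) (om : V →ₗ[K] V →ₗ[K] A)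
    (tr' : A →ₗ[K] V →ₗ[K] V) (tl' : V →ₗ[K] A →ₗ[K] V)
    (pr' : V →ₗ[K] A →ₗ[K] A) (pl' : A →ₗ[K] V →ₗ[K] A)
    (st' : V →ₗ[K] V →ₗ[K] V) (om' : V →ₗ[K] V →ₗ[K] A)
    (r : V →ₗ[K] A) (s : V →ₗ[K] V) :
    (∀ q q' : A × V,
          phiRS r s (unifiedMul m tr tl pr pl st om q q')
            = unifiedMul m tr' tl' pr' pl' st' om' (phiRS r s q) (phiRS r s q')) ↔
    HomPairConditions m tr tl pr pl st om tr' tl' pr' pl' st' om' r s := by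
  simp only [phiRS_apply, unifiedMul_apply, Prod.mk.injEq]
  constructor
  · intro h
    have a := fun u x => h (0, u) (x, 0)
    have b := fun x u => h (x, 0) (0, u)
    have c := fun u v => h (0, u) (0, v)
    simp only [map_zero, LinearMap.zero_apply, add_zero, zero_add] at a b c
    refine ⟨fun u x => (a u x).2, fun x u => (b x u).2, fun u v => ?_, fun u x => ?_,
      fun x u => ?_, fun u v => ?_⟩
    · rw [(c u v).2]; abel
    · rw [eq_sub_of_add_eq' (a u x).1]; abel
    · rw [eq_sub_of_add_eq' (b x u).1]; abel
    · rw [eq_sub_of_add_eq' (c u v).1]; abel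
  · rintro ⟨h1, h2, h3, h4, h5, h6⟩ ⟨x, u⟩ ⟨y, v⟩
    simp only [map_add, LinearMap.add_apply, h1, h2, h3, h4, h5, h6]
    constructor <;> abel

/-- Equivalence and cohomological equivalence of two extending structures:
(1) there is an isomorphism of alternative algebras `A ♮ V → A ♮' V` stabilizing `A`
iff there is a pair `(r,s)` with `s` bijective satisfying the six compatibility
conditions; (2) there is such an isomorphism which moreover co-stabilizes `V` iff
there is such a pair with `s = id`. -/
theorem unified_products_equivalent_iff
    (h2 : ringChar K ≠ 2) (h3 : ringChar K ≠ 3)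
    (m : A →ₗ[K] A →ₗ[K] A) (hm : IsAltMul m)
    (tr : A →ₗ[K] V →ₗ[K] V) (tl : V →ₗ[K] A →ₗ[K] V)
    (pr : V →ₗ[K] A →ₗ[K] A) (pl : A →ₗ[K] V →ₗ[K] A)
    (st : V →ₗ[K] V →ₗ[K] V) (om : V →ₗ[K] V →ₗ[K] A)
    (tr' : A →ₗ[K] V →ₗ[K] V) (tl' : V →ₗ[K] A →ₗ[K] V)
    (pr' : V →ₗ[K] A →ₗ[K] A) (pl' : A →ₗ[K] V →ₗ[K] A)
    (st' : V →ₗ[K] V →ₗ[K] V) (om' : V →ₗ[K] V →ₗ[K] A)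
    (hΩ : IsAltMul (unifiedMul m tr tl pr pl st om))
    (hΩ' : IsAltMul (unifiedMul m tr' tl' pr' pl' st' om')) :
    ((∃ φ : (A × V) →ₗ[K] (A × V),
        Function.Bijective φ ∧
        (∀ q q' : A × V,
          φ (unifiedMul m tr tl pr pl st om q q')
            = unifiedMul m tr' tl' pr' pl' st' om' (φ q) (φ q')) ∧
        (∀ x : A, φ (x, 0) = (x, 0))) ↔
      (∃ (r : V →ₗ[K] A) (s : V →ₗ[K] V), Function.Bijective s ∧
        HomPairConditions m tr tl pr pl st om tr' tl' pr' pl' st' om' r s)) ∧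
    ((∃ φ : (A × V) →ₗ[K] (A × V),
        Function.Bijective φ ∧
        (∀ q q' : A × V,
          φ (unifiedMul m tr tl pr pl st om q q')
            = unifiedMul m tr' tl' pr' pl' st' om' (φ q) (φ q')) ∧
        (∀ x : A, φ (x, 0) = (x, 0)) ∧
        (∀ q : A × V, (φ q).2 = q.2)) ↔
      (∃ r : V →ₗ[K] A,
        HomPairConditions m tr tl pr pl st om tr' tl' pr' pl' st' om' r LinearMap.id)) := by
  constructor
  · constructor
    · rintro ⟨φ, hb, hh, hA⟩
      rw [eq_phiRS φ hA] at hb hh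
      exact ⟨_, _, (phiRS_bij _ _).1 hb, (phiRS_hom_iff ..).1 hh⟩
    · rintro ⟨r, s, hs, hc⟩
      exact ⟨phiRS r s, (phiRS_bij _ _).2 hs, (phiRS_hom_iff ..).2 hc,
        fun x => by simp [phiRS_apply]⟩
  · constructor
    · rintro ⟨φ, hb, hh, hA, hV⟩
      have hs : LinearMap.snd K A V ∘ₗ φ ∘ₗ LinearMap.inr K A V = LinearMap.id := by
        refine LinearMap.ext fun u => ?_
        simp [hV]
      have e := eq_phiRS φ hA
      rw [hs] at e
      rw [e] at hh
      exact ⟨_, (phiRS_hom_iff ..).1 hh⟩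
    · rintro ⟨r, hc⟩
      exact ⟨phiRS r LinearMap.id, (phiRS_bij _ _).2 Function.bijective_id,
        (phiRS_hom_iff ..).2 hc, fun x => by simp [phiRS_apply],
        fun q => by simp [phiRS_apply]⟩

end AltExtend
end

section
/- Let (E, ∘) be an alternative algebra over a field K of characteristic ≠ 2,3 and let A, B ⊆ E be subalgebras such that E = A ⊕ B as vector spaces, with linear projections p_A: E → A and p_B: E → B. Define bilinear maps by x⊴u := p_A(x∘u), x▷u := p_B(x∘u), u⊵x := p_A(u∘x), u◁x := p_B(u∘x) for x ∈ A, u ∈ B. Then (A, B, ▷, ◁, ⊵, ⊴) is a matched pair of alternative algebras, i.e. the direct sum A⊕B with multiplication (x,u)•(y,v) := (x∘y + u⊵y + x⊴v, u∘v + x▷v + u◁y) is an alternative algebra, and the map (x,u) ↦ x + u is an isomorphism of alternative algebras A⋈B → E. -/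
namespace AltExtend

variable {K : Type*} [Field K]
variable {A : Type*} [AddCommGroup A] [Module K A]
variable {B : Type*} [AddCommGroup B] [Module K B]

/-- The bicrossed product multiplication on `A × B`:
`(x,u) • (y,v) = (x∘y + u⊵y + x⊴v, u*v + x▷v + u◁y)`, where `tr x v = x ▷ v`,
`tl u y = u ◁ y`, `pr u y = u ⊵ y` and `pl x v = x ⊴ v`. -/
def matchedMul (m : A →ₗ[K] A →ₗ[K] A) (mB : B →ₗ[K] B →ₗ[K] B)
    (tr : A →ₗ[K] B →ₗ[K] B) (tl : B →ₗ[K] A →ₗ[K] B)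
    (pr : B →ₗ[K] A →ₗ[K] A) (pl : A →ₗ[K] B →ₗ[K] A) :
    (A × B) →ₗ[K] (A × B) →ₗ[K] (A × B) :=
  LinearMap.mk₂ K
    (fun p q => (m p.1 q.1 + pr p.2 q.1 + pl p.1 q.2,
                 mB p.2 q.2 + tr p.1 q.2 + tl p.2 q.1))
    (fun p p' q => by simp [Prod.ext_iff]; constructor <;> abel)
    (fun c p q => by simp [Prod.ext_iff, smul_add])
    (fun p q q' => by simp [Prod.ext_iff]; constructor <;> abel)
    (fun c p q => by simp [Prod.ext_iff, smul_add])

/-- If the alternative algebra `E` factorizes through two subalgebras `A` and `B`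
(`E = A ⊕ B` as vector spaces, with projections `pA`, `pB`), then the bilinear maps
`x⊴u := pA(x∘u)`, `x▷u := pB(x∘u)`, `u⊵x := pA(u∘x)`, `u◁x := pB(u∘x)` make
`(A, B, ▷, ◁, ⊵, ⊴)` a matched pair of alternative algebras, and
`(x,u) ↦ x + u` is an isomorphism of alternative algebras `A ⋈ B ≅ E`. -/
theorem factorization_gives_matched_pair
    {E : Type*} [AddCommGroup E] [Module K E]
    (h2 : ringChar K ≠ 2) (h3 : ringChar K ≠ 3)
    (mE : E →ₗ[K] E →ₗ[K] E) (hE : IsAltMul mE)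
    (A B : Submodule K E)
    (hA : ∀ x ∈ A, ∀ y ∈ A, mE x y ∈ A) (hB : ∀ u ∈ B, ∀ v ∈ B, mE u v ∈ B)
    (hcompl : IsCompl A B)
    (pA pB : E →ₗ[K] E)
    (hpA : ∀ e : E, pA e ∈ A) (hpB : ∀ e : E, pB e ∈ B)
    (hsum : ∀ e : E, pA e + pB e = e)
    (mA : A →ₗ[K] A →ₗ[K] A) (hmA : ∀ x y : A, (mA x y : E) = mE x y)
    (mB : B →ₗ[K] B →ₗ[K] B) (hmB : ∀ u v : B, (mB u v : E) = mE u v)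
    (tr : A →ₗ[K] B →ₗ[K] B) (tl : B →ₗ[K] A →ₗ[K] B)
    (pr : B →ₗ[K] A →ₗ[K] A) (pl : A →ₗ[K] B →ₗ[K] A)
    (htr : ∀ (x : A) (u : B), ((tr x u : B) : E) = pB (mE x u))
    (htl : ∀ (u : B) (x : A), ((tl u x : B) : E) = pB (mE u x))
    (hpr : ∀ (u : B) (x : A), (pr u x : E) = pA (mE u x))
    (hpl : ∀ (x : A) (u : B), (pl x u : E) = pA (mE x u)) :
    IsAltMul (matchedMul mA mB tr tl pr pl) ∧
    (∀ q : A × B, (A.subtype.coprod B.subtype) q = (q.1 : E) + (q.2 : E)) ∧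
    Function.Bijective (A.subtype.coprod B.subtype) ∧
    (∀ q q' : A × B,
      (A.subtype.coprod B.subtype) (matchedMul mA mB tr tl pr pl q q')
        = mE ((A.subtype.coprod B.subtype) q) ((A.subtype.coprod B.subtype) q')) := by
  have hφ : ∀ q : A × B, (A.subtype.coprod B.subtype) q = (q.1 : E) + (q.2 : E) := by
    intro q
    simp [LinearMap.coprod_apply]
  have hmul : ∀ q q' : A × B,
      (A.subtype.coprod B.subtype) (matchedMul mA mB tr tl pr pl q q')
        = mE ((A.subtype.coprod B.subtype) q) ((A.subtype.coprod B.subtype) q') := by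
    rintro ⟨x, u⟩ ⟨y, v⟩
    rw [hφ, hφ, hφ]
    simp only [matchedMul, LinearMap.mk₂_apply, Submodule.coe_add, hmA, hmB, htr, htl, hpr, hpl,
      map_add, LinearMap.add_apply]
    have e1 := hsum (mE (u : E) (y : E))
    have e2 := hsum (mE (x : E) (v : E))
    calc _ = mE (x : E) (y : E) + (pA (mE (u : E) (y : E)) + pB (mE (u : E) (y : E)))
          + (pA (mE (x : E) (v : E)) + pB (mE (x : E) (v : E))) + mE (u : E) (v : E) := by abel
      _ = _ := by rw [e1, e2]; abel
  have hinj : Function.Injective (A.subtype.coprod B.subtype) := by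
    rw [injective_iff_map_eq_zero]
    rintro ⟨x, u⟩ h
    rw [hφ] at h
    simp only at h
    have hx : (x : E) = -(u : E) := eq_neg_of_add_eq_zero_left h
    have hx0 : (x : E) = 0 :=
      Submodule.disjoint_def.mp hcompl.disjoint _ x.2 (hx ▸ B.neg_mem u.2)
    have hu0 : (u : E) = 0 := by rwa [hx0, zero_add] at h
    exact Prod.ext (Subtype.ext hx0) (Subtype.ext hu0)
  have hassoc : ∀ a b c : A × B,
      (A.subtype.coprod B.subtype) (assoc (matchedMul mA mB tr tl pr pl) a b c)
        = assoc mE ((A.subtype.coprod B.subtype) a) ((A.subtype.coprod B.subtype) b)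
          ((A.subtype.coprod B.subtype) c) := by
    intro a b c
    simp only [assoc, map_sub, hmul]
  refine ⟨⟨fun a b c => hinj ?_, fun a b c => hinj ?_⟩, hφ, ⟨hinj, fun e => ?_⟩, hmul⟩
  · rw [map_neg, hassoc, hassoc]
    exact hE.1 _ _ _
  · rw [map_neg, hassoc, hassoc]
    exact hE.2 _ _ _
  · exact ⟨(⟨pA e, hpA e⟩, ⟨pB e, hpB e⟩), by rw [hφ]; exact hsum e⟩

end AltExtend
end

section
/- Let (A, B, ▷, ◁, ⊵, ⊴) be a matched pair of alternative algebras over a field K of characteristic ≠ 2,3 with bicrossed product E = A⋈B, and let r: B → A be a deformation map of the matched pair. Then: (1) the image of the linear map f_r: B → A⋈B, f_r(u) := (r(u), u), is a subalgebra of A⋈B; (2) the vector space B with the deformed product u∘_r v := u∘v + r(u)▷v + u◁r(v) is an alternative algebra B_r, and f_r is an algebra isomorphism from B_r onto Im(f_r); (3) Im(f_r) is an A-complement of A⋈B, i.e. A⋈B = A ⊕ Im(f_r) as vector spaces. -/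
namespace AltExtend

variable {K : Type*} [Field K]
variable {A : Type*} [AddCommGroup A] [Module K A]
variable {B : Type*} [AddCommGroup B] [Module K B]

/-- `r : B → A` is a deformation map of the matched pair `(A, B, ▷, ◁, ⊵, ⊴)`. -/
def IsDefMap (m : A →ₗ[K] A →ₗ[K] A) (mB : B →ₗ[K] B →ₗ[K] B)
    (tr : A →ₗ[K] B →ₗ[K] B) (tl : B →ₗ[K] A →ₗ[K] B)
    (pr : B →ₗ[K] A →ₗ[K] A) (pl : A →ₗ[K] B →ₗ[K] A)
    (r : B →ₗ[K] A) : Prop :=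
  ∀ u v : B, r (mB u v) - m (r u) (r v)
    = pr u (r v) + pl (r u) v - r (tr (r u) v + tl u (r v))

/-- The `r`-deformation of the product of `B`: `u ∘_r v := u∘v + r(u)▷v + u◁r(v)`. -/
def deformedMul (mB : B →ₗ[K] B →ₗ[K] B)
    (tr : A →ₗ[K] B →ₗ[K] B) (tl : B →ₗ[K] A →ₗ[K] B)
    (r : B →ₗ[K] A) : B →ₗ[K] B →ₗ[K] B :=
  LinearMap.mk₂ K (fun u v => mB u v + tr (r u) v + tl u (r v))
    (fun u u' v => by simp; abel)
    (fun c u v => by simp)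
    (fun u v v' => by simp; abel)
    (fun c u v => by simp)

/-- Given a matched pair of alternative algebras with bicrossed product `A ⋈ B` and a
deformation map `r : B → A`: (1) the image of `f_r(u) := (r(u), u)` is a subalgebra of
`A ⋈ B`; (2) the `r`-deformation `B_r` is an alternative algebra and `f_r` is an algebra
isomorphism from `B_r` onto its image; (3) `Im(f_r)` is an `A`-complement of `A ⋈ B`. -/
theorem deformation_map_gives_complement
    (h2 : ringChar K ≠ 2) (h3 : ringChar K ≠ 3)
    (m : A →ₗ[K] A →ₗ[K] A) (hm : IsAltMul m)
    (mB : B →ₗ[K] B →ₗ[K] B) (hmB : IsAltMul mB)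
    (tr : A →ₗ[K] B →ₗ[K] B) (tl : B →ₗ[K] A →ₗ[K] B)
    (pr : B →ₗ[K] A →ₗ[K] A) (pl : A →ₗ[K] B →ₗ[K] A)
    (hmp : IsAltMul (matchedMul m mB tr tl pr pl))
    (r : B →ₗ[K] A) (hr : IsDefMap m mB tr tl pr pl r) :
    (∀ p ∈ LinearMap.range (r.prod LinearMap.id),
      ∀ q ∈ LinearMap.range (r.prod LinearMap.id),
        matchedMul m mB tr tl pr pl p q ∈ LinearMap.range (r.prod LinearMap.id)) ∧
    IsAltMul (deformedMul mB tr tl r) ∧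
    Function.Injective (r.prod (LinearMap.id : B →ₗ[K] B)) ∧
    (∀ u v : B,
      (r.prod LinearMap.id) (deformedMul mB tr tl r u v)
        = matchedMul m mB tr tl pr pl ((r.prod LinearMap.id) u) ((r.prod LinearMap.id) v)) ∧
    IsCompl (LinearMap.range (LinearMap.inl K A B))
      (LinearMap.range (r.prod (LinearMap.id : B →ₗ[K] B))) := by
  have hf : ∀ u v : B,
      (r.prod LinearMap.id) (deformedMul mB tr tl r u v)
        = matchedMul m mB tr tl pr pl ((r.prod LinearMap.id) u) ((r.prod LinearMap.id) v) := by
    intro u v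
    have h := hr u v
    rw [sub_eq_iff_eq_add] at h
    refine Prod.ext ?_ rfl
    change r (mB u v + tr (r u) v + tl u (r v)) = m (r u) (r v) + pr u (r v) + pl (r u) v
    rw [map_add, map_add, h, map_add]
    abel
  have hinj : Function.Injective (r.prod (LinearMap.id : B →ₗ[K] B)) := by
    intro u v h
    exact congrArg Prod.snd h
  have ha : ∀ u v w : B, (r.prod LinearMap.id) (assoc (deformedMul mB tr tl r) u v w)
      = assoc (matchedMul m mB tr tl pr pl) ((r.prod LinearMap.id) u)
        ((r.prod LinearMap.id) v) ((r.prod LinearMap.id) w) := by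
    intro u v w
    simp only [assoc, map_sub, hf]
  refine ⟨?_, ⟨?_, ?_⟩, hinj, hf, ?_⟩
  · rintro _ ⟨u, rfl⟩ _ ⟨v, rfl⟩
    exact ⟨_, hf u v⟩
  · intro x y z
    apply hinj
    rw [map_neg, ha, ha]
    exact hmp.1 _ _ _
  · intro x y z
    apply hinj
    rw [map_neg, ha, ha]
    exact hmp.2 _ _ _
  · constructor
    · rw [Submodule.disjoint_def]
      rintro _ ⟨a, rfl⟩ ⟨u, hu⟩
      have h1 : u = 0 := congrArg Prod.snd hu
      rw [← hu, h1, map_zero]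
    · rw [codisjoint_iff, eq_top_iff]
      rintro ⟨a, u⟩ -
      refine Submodule.mem_sup.2 ⟨_, ⟨a - r u, rfl⟩, _, ⟨u, rfl⟩, ?_⟩
      simp

end AltExtend
end

section
/- Let (A, B, ▷, ◁, ⊵, ⊴) be a matched pair of alternative algebras over a field K of characteristic ≠ 2,3 with bicrossed product E = A⋈B. If B̄ is any A-complement of E (a subalgebra of E with E = A ⊕ B̄ as vector spaces), then there exists a deformation map r: B → A of the matched pair such that B̄ is isomorphic, as an alternative algebra, to the r-deformation B_r, i.e. to the vector space B equipped with the product u∘_r v := u∘v + r(u)▷v + u◁r(v). -/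
namespace AltExtend

variable {K : Type*} [Field K]
variable {A : Type*} [AddCommGroup A] [Module K A]
variable {B : Type*} [AddCommGroup B] [Module K B]

/-- Given a matched pair of alternative algebras with bicrossed product `E = A ⋈ B`, any
`A`-complement `B̄` of `E` (a subalgebra of `E` with `E = A ⊕ B̄`) is isomorphic, as an
alternative algebra, to the `r`-deformation `B_r` of `B` for some deformation map
`r : B → A`. -/
theorem complement_is_deformation
    (h2 : ringChar K ≠ 2) (h3 : ringChar K ≠ 3)
    (m : A →ₗ[K] A →ₗ[K] A) (hm : IsAltMul m)
    (mB : B →ₗ[K] B →ₗ[K] B) (hmB : IsAltMul mB)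
    (tr : A →ₗ[K] B →ₗ[K] B) (tl : B →ₗ[K] A →ₗ[K] B)
    (pr : B →ₗ[K] A →ₗ[K] A) (pl : A →ₗ[K] B →ₗ[K] A)
    (hmp : IsAltMul (matchedMul m mB tr tl pr pl))
    (C : Submodule K (A × B))
    (hC : ∀ p ∈ C, ∀ q ∈ C, matchedMul m mB tr tl pr pl p q ∈ C)
    (hcompl : IsCompl (LinearMap.range (LinearMap.inl K A B)) C) :
    ∃ r : B →ₗ[K] A, IsDefMap m mB tr tl pr pl r ∧
      ∃ ψ : B →ₗ[K] A × B, Function.Injective ψ ∧ LinearMap.range ψ = C ∧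
        ∀ u v : B,
          ψ (deformedMul mB tr tl r u v)
            = matchedMul m mB tr tl pr pl (ψ u) (ψ v) := by
  let f : C →ₗ[K] B := (LinearMap.snd K A B).comp C.subtype
  have hinj : Function.Injective f := by
    rw [← LinearMap.ker_eq_bot, LinearMap.ker_eq_bot']
    rintro ⟨⟨a, b⟩, hp⟩ h
    have hb : b = 0 := h
    subst hb
    have h0 : ((a, 0) : A × B) ∈ (⊥ : Submodule K (A × B)) := by
      rw [← hcompl.inf_eq_bot]
      exact ⟨⟨a, rfl⟩, hp⟩
    exact Subtype.ext ((Submodule.mem_bot K).1 h0)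
  have hsurj : Function.Surjective f := by
    intro b
    have ht : ((0, b) : A × B) ∈ LinearMap.range (LinearMap.inl K A B) ⊔ C := by
      rw [hcompl.sup_eq_top]; trivial
    obtain ⟨y, ⟨a, rfl⟩, z, hz, hyz⟩ := Submodule.mem_sup.1 ht
    refine ⟨⟨z, hz⟩, ?_⟩
    have := congrArg Prod.snd hyz
    simpa [f] using this
  let e : C ≃ₗ[K] B := LinearEquiv.ofBijective f ⟨hinj, hsurj⟩
  let ψ : B →ₗ[K] A × B := C.subtype.comp e.symm.toLinearMap
  let r : B →ₗ[K] A := (LinearMap.fst K A B).comp ψ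
  have hmem : ∀ u, ψ u ∈ C := fun u => (e.symm u).2
  have hsnd : ∀ u, (ψ u).2 = u := fun u => e.apply_symm_apply u
  have hψ : ∀ u, ψ u = (r u, u) := fun u => Prod.ext rfl (hsnd u)
  have hC' : ∀ p ∈ C, ψ p.2 = p := fun p hp =>
    congrArg Subtype.val (e.symm_apply_apply ⟨p, hp⟩)
  have hmul : ∀ u v : B, ψ (deformedMul mB tr tl r u v)
      = matchedMul m mB tr tl pr pl (ψ u) (ψ v) := by
    intro u v
    rw [← hC' _ (hC _ (hmem u) _ (hmem v)), hψ u, hψ v]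
    rfl
  refine ⟨r, ?_, ψ, ?_, ?_, hmul⟩
  · intro u v
    have h := congrArg Prod.fst (hmul u v)
    rw [hψ u, hψ v] at h
    have h' : r (mB u v + tr (r u) v + tl u (r v))
      = m (r u) (r v) + pr u (r v) + pl (r u) v := h
    rw [map_add, map_add] at h'
    rw [map_add, sub_eq_iff_eq_add, eq_sub_of_add_eq (eq_sub_of_add_eq h')]
    abel
  · intro u v h
    rw [← hsnd u, h, hsnd v]
  · ext p
    constructor
    · rintro ⟨u, rfl⟩
      exact hmem u
    · intro hp
      exact ⟨p.2, hC' p hp⟩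

end AltExtend
end
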